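/- Let p be a prime, q = 1/p, and let n ≥ 1 and μ ≥ 1 be integers. Set k = ⌊n/2⌋, s = ⌊(μ−1)/2⌋, and R = q^{s+1} · ∑_{j=0}^{k−1} (q^μ(1−q^n) − q^{2s+2}(1−q^{2j+1})) · q^{2j} · Π_{2j}(q)·Π_{j+s}(q²) / (Π_j(q²)² · Π_s(q²)). Then Q(n, p^μ) = (q^μ(1−q^n) − R)/(1−q), and R ≥ 0, with R = 0 only when k = 0. -/

import Mathlib

/-- Number of symmetric `n × n` matrices over `ZMod m` with nonzero determinant. -/
noncomputable def Nsym (n m : ℕ) : ℕ :=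
  Nat.card {A : Matrix (Fin n) (Fin n) (ZMod m) // A.IsSymm ∧ A.det ≠ 0}

/-- Proportion of symmetric `n × n` matrices over `ZMod m` with nonzero determinant. -/
noncomputable def Psym (n m : ℕ) : ℝ :=
  (Nsym n m : ℝ) / (m : ℝ) ^ (n * (n + 1) / 2)

/-- `Q(n,m) = 1 - P(n,m)`. -/
noncomputable def Qsym (n m : ℕ) : ℝ := 1 - Psym n m

/-- `Π_n(t) = ∏_{j=1}^n (1 - t^j)`. -/
noncomputable def PiProd (n : ℕ) (t : ℝ) : ℝ :=
  ∏ j ∈ Finset.range n, (1 - t ^ (j + 1))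

open Matrix Finset

section Counting

variable {R : Type*} [CommRing R] {ι κ : Type*} [Fintype ι] [DecidableEq ι]
  [Fintype κ] [DecidableEq κ]

/-- The number of symmetric matrices over `R`, indexed by `ι`, whose determinant satisfies `P`. -/
noncomputable def symmCount (ι : Type*) [Fintype ι] [DecidableEq ι] (P : R → Prop) : ℕ :=
  Nat.card {Z : Matrix ι ι R // Z.IsSymm ∧ P Z.det}

/-- The matrix `Z` bordered by the corner entry `a`, the row `v` and the column `w`. -/
def bordered (a : R) (v w : ι → R) (Z : Matrix ι ι R) : Matrix (Unit ⊕ ι) (Unit ⊕ ι) R :=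
  fromBlocks (of fun _ _ => a) (replicateRow Unit v) (replicateCol Unit w) Z

/-- The number of symmetric matrices `Z` such that the determinant of `Z` bordered by `a`, `v`
and `w` satisfies `P`. -/
noncomputable def borderedCount (a : R) (v w : ι → R) (P : R → Prop) : ℕ :=
  Nat.card {Z : Matrix ι ι R // Z.IsSymm ∧ P (bordered a v w Z).det}

theorem symmCount_congr (e : ι ≃ κ) (P : R → Prop) : symmCount ι P = symmCount κ P := by
  refine Nat.card_congr (Equiv.subtypeEquiv (reindex e e) fun Z => ?_)
  rw [det_reindex_self]
  refine and_congr_left fun _ => ⟨fun h => h.submatrix _, fun h => ?_⟩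
  simpa using h.submatrix e

theorem det_bordered_smul_row (c a : R) (v w : ι → R) (Z : Matrix ι ι R) :
    (bordered (c * a) (c • v) w Z).det = c * (bordered a v w Z).det := by
  have h : bordered (c * a) (c • v) w Z
      = fromBlocks (of fun _ _ : Unit => c) 0 0 1 * bordered a v w Z := by
    rw [bordered, bordered, fromBlocks_multiply]
    congr 1 <;> ext <;> simp [Matrix.mul_apply]
  rw [h, det_mul, det_fromBlocks_zero₂₁]
  simp

theorem det_bordered_swap (a : R) (v w : ι → R) {Z : Matrix ι ι R} (hZ : Z.IsSymm) :
    (bordered a v w Z).det = (bordered a w v Z).det := by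
  rw [← det_transpose, bordered, bordered, fromBlocks_transpose, hZ.eq]
  rfl

theorem det_bordered_comp (e : κ ≃ ι) (a : R) (v w : ι → R) (Z : Matrix ι ι R) :
    (bordered a (v ∘ e) (w ∘ e) (Z.submatrix e e)).det = (bordered a v w Z).det := by
  rw [← det_submatrix_equiv_self ((Equiv.refl Unit).sumCongr e) (bordered a v w Z)]
  congr 1
  ext (i | i) (j | j) <;> rfl

theorem borderedCount_comp (e : κ ≃ ι) (a : R) (v w : ι → R) (P : R → Prop) :
    borderedCount a (v ∘ e) (w ∘ e) P = borderedCount a v w P := by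
  refine (Nat.card_congr (Equiv.subtypeEquiv (reindex e.symm e.symm) fun Z => ?_)).symm
  have h : reindex e.symm e.symm Z = Z.submatrix e e := rfl
  rw [h, det_bordered_comp]
  refine and_congr_left fun _ => ⟨fun h => h.submatrix _, fun h => ?_⟩
  simpa using h.submatrix e.symm

/-- Completing the square: an invertible block can be split off without changing the number of
symmetric completions. -/
theorem card_symm_fromBlocks (U : Matrix κ κ R) (hU : IsUnit U.det) (B : Matrix κ ι R)
    (C : Matrix ι κ R) (hs : (C * U⁻¹ * B).IsSymm) (P : R → Prop)
    (hP : ∀ u x, IsUnit u → (P (u * x) ↔ P x)) :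
    Nat.card {Z : Matrix ι ι R // Z.IsSymm ∧ P (fromBlocks U B C Z).det} = symmCount ι P := by
  refine Nat.card_congr (Equiv.subtypeEquiv (Equiv.subRight (C * U⁻¹ * B)) fun Z => ?_)
  let := invertibleOfIsUnitDet U hU
  rw [det_fromBlocks₁₁, hP _ _ hU, invOf_eq_nonsing_inv]
  refine and_congr_left fun _ => ⟨fun h => h.sub hs, fun h => ?_⟩
  simpa using h.add hs

theorem borderedCount_of_isUnit {a : R} (ha : IsUnit a) (c : R) (v : ι → R) (P : R → Prop)
    (hP : ∀ u x, IsUnit u → (P (u * x) ↔ P x)) :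
    borderedCount a v (c • v) P = symmCount ι P := by
  refine card_symm_fromBlocks _ (by simpa using ha) _ _ ?_ P hP
  ext i j
  simp [Matrix.mul_apply]
  ring

/-- Symmetric matrices indexed by `Unit ⊕ ι`, by the corner entry and the rest of its row. -/
theorem card_symm_sum {R ι : Type*} [Fintype R] [Fintype ι] [DecidableEq ι]
    (Q : Matrix (Unit ⊕ ι) (Unit ⊕ ι) R → Prop) :
    Nat.card {A : Matrix (Unit ⊕ ι) (Unit ⊕ ι) R // A.IsSymm ∧ Q A} =
      ∑ a : R, ∑ v : ι → R, Nat.card {Z : Matrix ι ι R // Z.IsSymm ∧ Q (bordered a v v Z)} := by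
  classical
  rw [← Fintype.sum_prod_type' (f := fun (a : R) (v : ι → R) =>
    Nat.card {Z : Matrix ι ι R // Z.IsSymm ∧ Q (bordered a v v Z)}), ← Nat.card_sigma]
  have hb (A : Matrix (Unit ⊕ ι) (Unit ⊕ ι) R) (h : A.IsSymm) :
      bordered (A (.inl ()) (.inl ())) (fun i => A (.inl ()) (.inr i))
        (fun i => A (.inl ()) (.inr i)) A.toBlocks₂₂ = A := by
    ext (i | i) (j | j) <;> simp [bordered, toBlocks₂₂, h.apply]
  refine Nat.card_congr
    { toFun := fun A => ⟨(A.1 (.inl ()) (.inl ()), fun i => A.1 (.inl ()) (.inr i)),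
        A.1.toBlocks₂₂, ?_, ?_⟩
      invFun := fun X => ⟨bordered X.1.1 X.1.2 X.1.2 X.2.1, ?_, X.2.2.2⟩
      left_inv := ?_
      right_inv := ?_ }
  · ext i j
    exact A.2.1.apply _ _
  · simpa only [hb A.1 A.2.1] using A.2.2
  · exact IsSymm.fromBlocks (by ext; rfl) (by ext; rfl) X.2.2.1
  · rintro ⟨A, h, h'⟩
    exact Subtype.ext (hb A h)
  · rintro ⟨⟨a, v⟩, Z, h, h'⟩
    rfl

theorem symmCount_sum [Fintype R] (P : R → Prop) :
    symmCount (Unit ⊕ ι) P = ∑ a : R, ∑ v : ι → R, borderedCount a v v P :=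
  card_symm_sum fun A => P A.det

/-- A row with a nonunit corner and a unit elsewhere splits off an invertible `2 × 2` block. -/
theorem borderedCount_of_isUnit_apply [Fintype R] {a : R} {v : Unit ⊕ κ → R}
    (ha : ∀ c, IsUnit (a * c - v (.inl ()) * v (.inl ()))) (P : R → Prop)
    (hP : ∀ u x, IsUnit u → (P (u * x) ↔ P x)) :
    borderedCount a v v P
      = Fintype.card R ^ (Fintype.card κ + 1) * symmCount κ P := by
  classical
  have key (c : R) (w : κ → R) : Nat.card {Z : Matrix κ κ R // Z.IsSymm ∧
      P (bordered a v v (bordered c w w Z)).det} = symmCount κ P := by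
    let b := v (.inl ())
    let U : Matrix (Unit ⊕ Unit) (Unit ⊕ Unit) R := bordered a (fun _ => b) (fun _ => b)
      (of fun _ _ => c)
    let B : Matrix (Unit ⊕ Unit) κ R := fromRows (replicateRow Unit fun i => v (.inr i))
      (replicateRow Unit w)
    have hUs : U.IsSymm := IsSymm.fromBlocks (by ext; rfl) (by ext; rfl) (by ext; rfl)
    have hU : IsUnit U.det := by
      have : U.det = a * c - b * b := by
        rw [← det_submatrix_equiv_self (finSumFinEquiv.symm.trans
          ((Equiv.ofUnique (Fin 1) Unit).sumCongr (Equiv.ofUnique (Fin 1) Unit)) :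
            Fin (1 + 1) ≃ Unit ⊕ Unit), det_fin_two]
        rfl
      rw [this]
      exact ha c
    rw [← card_symm_fromBlocks U hU B Bᵀ _ P hP]
    · refine Nat.card_congr (Equiv.subtypeEquivRight fun Z => ?_)
      rw [← det_submatrix_equiv_self (Equiv.sumAssoc Unit Unit κ)]
      have : (bordered a v v (bordered c w w Z)).submatrix (Equiv.sumAssoc Unit Unit κ)
          (Equiv.sumAssoc Unit Unit κ) = fromBlocks U B Bᵀ Z := by
        ext ((i | i) | i) ((j | j) | j) <;> rfl
      rw [this]
    · rw [IsSymm, transpose_mul, transpose_mul, transpose_transpose, transpose_nonsing_inv,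
        hUs.eq, Matrix.mul_assoc]
  rw [borderedCount, card_symm_sum fun Z => P (bordered a v v Z).det]
  simp only [key, sum_const, card_univ, smul_eq_mul, Fintype.card_fun]
  ring

end Counting

section Recurrence

/-- `π` behaves in `R` like a uniformizer of a discrete valuation ring with residue field of
cardinality `p`, truncated at the `M`-th power of the maximal ideal. -/
structure IsTruncatedUniformizer {R : Type*} [CommRing R] (π : R) (p M : ℕ) : Prop where
  isUnit_iff (x : R) : IsUnit x ↔ ¬ π ∣ x
  card_annihilator : Nat.card {x : R // π * x = 0} = p
  pow_succ_dvd_mul_iff (m : ℕ) (x : R) : m + 1 ≤ M → (π ^ (m + 1) ∣ π * x ↔ π ^ m ∣ x)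

theorem pow_dvd_isUnit_mul_iff {R : Type*} [CommRing R] {π : R} (μ : ℕ) (u x : R) (hu : IsUnit u) :
    π ^ μ ∣ u * x ↔ π ^ μ ∣ x :=
  hu.dvd_mul_left

theorem IsTruncatedUniformizer.pow_dvd_mul_iff {R : Type*} [CommRing R] {π : R} {p M : ℕ}
    (h : IsTruncatedUniformizer π p M) {μ : ℕ}
    (hμ : μ ≤ M) (x : R) : π ^ μ ∣ π * x ↔ π ^ (μ - 1) ∣ x := by
  rcases μ with _ | m
  · simp
  · exact h.pow_succ_dvd_mul_iff m x hμ

theorem sum_comp_addMonoidHom {G : Type*} [AddGroup G] [Fintype G] (φ : G →+ G)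
    (f : G → ℝ) [DecidablePred (· ∈ Set.range φ)] :
    ∑ x, f (φ x) = Nat.card {x // φ x = 0} * ∑ y with y ∈ Set.range φ, f y := by
  classical
  have h0 : (0 : G) ∈ Set.range φ := ⟨0, map_zero φ⟩
  rw [Finset.sum_comp, mul_sum]
  have himage : image φ univ = univ.filter (· ∈ Set.range φ) := by ext; simp
  rw [himage]
  refine sum_congr rfl fun y hy => ?_
  rw [AddMonoidHom.card_fiber_eq_of_mem_range φ (by simpa using hy) h0, nsmul_eq_mul,
    Nat.card_eq_fintype_card, Fintype.card_subtype]

variable {R : Type*} [CommRing R] [Fintype R] {ι : Type*} [Fintype ι] [DecidableEq ι]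
  {π : R} {p M : ℕ}

open scoped Classical in
theorem IsTruncatedUniformizer.sum_smul (h : IsTruncatedUniformizer π p M)
    (f : (ι → R) → ℝ) :
    ∑ v, f (π • v) = (p : ℝ) ^ Fintype.card ι * ∑ v with ∀ i, π ∣ v i, f v := by
  have key := sum_comp_addMonoidHom (DistribSMul.toAddMonoidHom (ι → R) π) f
  have hcard : Nat.card {v : ι → R // DistribSMul.toAddMonoidHom (ι → R) π v = 0}
      = p ^ Fintype.card ι := by
    rw [← h.card_annihilator, ← Nat.card_eq_fintype_card (α := ι), ← Nat.card_fun]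
    refine Nat.card_congr ((Equiv.subtypeEquivRight fun v => ?_).trans
      (Equiv.subtypePiEquivPi (p := fun _ x => π * x = 0)))
    simp [funext_iff]
  have hrange : (univ.filter (· ∈ Set.range (DistribSMul.toAddMonoidHom (ι → R) π)))
      = univ.filter (fun v : ι → R => ∀ i, π ∣ v i) := by
    ext v
    simp only [mem_filter, mem_univ, true_and]
    constructor
    · rintro ⟨w, rfl⟩ i
      exact ⟨w i, rfl⟩
    · intro hv
      choose w hw using hv
      exact ⟨w, funext fun i => (hw i).symm⟩
  rw [hcard, hrange] at key
  exact_mod_cast key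

open scoped Classical in
theorem IsTruncatedUniformizer.sum_mul (h : IsTruncatedUniformizer π p M) (f : R → ℝ) :
    ∑ x, f (π * x) = p * ∑ x with π ∣ x, f x := by
  have key := sum_comp_addMonoidHom (AddMonoidHom.mulLeft π) f
  have hrange : (univ.filter (· ∈ Set.range (AddMonoidHom.mulLeft π)))
      = univ.filter (fun x : R => π ∣ x) := by
    ext x
    simp only [mem_filter, mem_univ, true_and]
    exact ⟨fun ⟨w, hw⟩ => ⟨w, hw.symm⟩, fun ⟨w, hw⟩ => ⟨w, hw.symm⟩⟩
  rw [hrange] at key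
  rw [← h.card_annihilator]
  exact key

theorem IsTruncatedUniformizer.pos (h : IsTruncatedUniformizer π p M) : 0 < p := by
  have : Nonempty {x : R // π * x = 0} := ⟨⟨0, mul_zero _⟩⟩
  rw [← h.card_annihilator]
  exact Nat.card_pos

/-- Classify symmetric matrices by the valuations of the entries in the first row. -/
theorem IsTruncatedUniformizer.symmCount_sum (h : IsTruncatedUniformizer π p M) {μ : ℕ}
    (hμ : μ ≤ M) {K q N : ℝ} {n : ℕ} (hK : K = Fintype.card R) (hq : q = 1 / p)
    (hn : n = Fintype.card ι)
    (hN : ∀ (a : R) (v : ι → R), π ∣ a → (¬ ∀ i, π ∣ v i) →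
      (borderedCount a v v (π ^ μ ∣ ·) : ℝ) = N) :
    (symmCount (Unit ⊕ ι) (π ^ μ ∣ ·) : ℝ) =
      (1 - q) * K ^ (n + 1) * symmCount ι (π ^ μ ∣ ·) + q * (1 - q ^ n) * K ^ (n + 1) * N +
      q ^ (n + 1) * ((1 - q) * K ^ (n + 1) * symmCount ι (π ^ (μ - 1) ∣ ·) +
        q * symmCount (Unit ⊕ ι) (π ^ (μ - 2) ∣ ·)) := by
  classical
  have hp : (p : ℝ) ≠ 0 := by exact_mod_cast h.pos.ne'
  have hqp : q * p = 1 := by rw [hq]; field_simp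
  have sum_dvd (f : R → ℝ) : ∑ x with π ∣ x, f x = q * ∑ x, f (π * x) := by
    rw [h.sum_mul, ← mul_assoc, hqp, one_mul]
  have sum_dvd_pi (f : (ι → R) → ℝ) :
      ∑ v with ∀ i, π ∣ v i, f v = q ^ n * ∑ v, f (π • v) := by
    rw [h.sum_smul, ← mul_assoc, hn, ← mul_pow, hqp, one_pow, one_mul]
  have card_dvd : (#{x : R | π ∣ x} : ℝ) = q * K := by
    have := sum_dvd fun _ => 1
    simpa [hK] using this
  have card_not_dvd : (#{x : R | ¬ π ∣ x} : ℝ) = (1 - q) * K := by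
    have : #{x : R | π ∣ x} + #{x : R | ¬ π ∣ x} = Fintype.card R :=
      card_filter_add_card_filter_not _
    have : (#{x : R | π ∣ x} : ℝ) + #{x : R | ¬ π ∣ x} = K := by rw [hK]; exact_mod_cast this
    linarith
  have card_pi : (Fintype.card (ι → R) : ℝ) = K ^ n := by
    rw [Fintype.card_fun, hK, hn]; push_cast; rfl
  have card_dvd_pi : (#{v : ι → R | ∀ i, π ∣ v i} : ℝ) = q ^ n * K ^ n := by
    have := sum_dvd_pi fun _ => 1
    rw [← card_pi]
    simpa using this
  have card_not_dvd_pi : (#{v : ι → R | ¬ ∀ i, π ∣ v i} : ℝ) = (1 - q ^ n) * K ^ n := by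
    have : #{v : ι → R | ∀ i, π ∣ v i} + #{v : ι → R | ¬ ∀ i, π ∣ v i} = Fintype.card (ι → R) :=
      card_filter_add_card_filter_not _
    have : (#{v : ι → R | ∀ i, π ∣ v i} : ℝ) + #{v : ι → R | ¬ ∀ i, π ∣ v i} = K ^ n := by
      rw [← card_pi]; exact_mod_cast this
    linarith
  have hdiv (a : R) (v : ι → R) : borderedCount (π * a) (π • v) (π • v) (π ^ μ ∣ ·)
      = borderedCount a v (π • v) (π ^ (μ - 1) ∣ ·) := by
    refine Nat.card_congr (Equiv.subtypeEquivRight fun Z => ?_)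
    rw [det_bordered_smul_row]
    exact and_congr_right fun _ => h.pow_dvd_mul_iff hμ _
  have hdiv' (a : R) (v : ι → R) : borderedCount (π * a) v (π • v) (π ^ (μ - 1) ∣ ·)
      = borderedCount a v v (π ^ (μ - 2) ∣ ·) := by
    refine Nat.card_congr (Equiv.subtypeEquivRight fun Z => and_congr_right fun hZ => ?_)
    rw [det_bordered_swap _ _ _ hZ, det_bordered_smul_row]
    exact h.pow_dvd_mul_iff ((Nat.sub_le _ _).trans hμ) _
  have sum_total (ν : ℕ) : (symmCount (Unit ⊕ ι) (π ^ ν ∣ ·) : ℝ) =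
      ∑ a : R, ∑ v : ι → R, (borderedCount a v v (π ^ ν ∣ ·) : ℝ) := by
    rw [_root_.symmCount_sum]; push_cast; rfl
  have unit_part (c : R) (ν : ℕ) :
      ∑ a : R with ¬ π ∣ a, ∑ v : ι → R, (borderedCount a v (c • v) (π ^ ν ∣ ·) : ℝ)
        = (1 - q) * K ^ (n + 1) * symmCount ι (π ^ ν ∣ ·) := by
    rw [sum_congr rfl (g := fun _ => K ^ n * (symmCount ι (π ^ ν ∣ ·) : ℝ))]
    · rw [sum_const, nsmul_eq_mul, card_not_dvd]; ring
    · intro a ha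
      have ha : IsUnit a := (h.isUnit_iff a).2 (by simpa using ha)
      simp_rw [borderedCount_of_isUnit ha c _ _ (pow_dvd_isUnit_mul_iff ν)]
      rw [sum_const, nsmul_eq_mul, card_univ, card_pi]
  have scaled_part : ∑ a : R, ∑ v : ι → R, (borderedCount a v (π • v) (π ^ (μ - 1) ∣ ·) : ℝ)
      = (1 - q) * K ^ (n + 1) * symmCount ι (π ^ (μ - 1) ∣ ·) +
        q * symmCount (Unit ⊕ ι) (π ^ (μ - 2) ∣ ·) := by
    rw [← sum_filter_add_sum_filter_not univ (fun a : R => π ∣ a), unit_part, sum_dvd]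
    simp_rw [hdiv', sum_total]
    ring
  have split_row (a : R) (ha : π ∣ a) : ∑ v : ι → R, (borderedCount a v v (π ^ μ ∣ ·) : ℝ) =
      q ^ n * ∑ v : ι → R, (borderedCount a (π • v) (π • v) (π ^ μ ∣ ·) : ℝ)
        + (1 - q ^ n) * K ^ n * N := by
    rw [← sum_filter_add_sum_filter_not univ (fun v : ι → R => ∀ i, π ∣ v i), sum_dvd_pi,
      sum_congr rfl (fun v hv => hN a v ha (by simpa using hv)), sum_const, nsmul_eq_mul,
      card_not_dvd_pi]
  have hunit := unit_part 1 μ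
  simp_rw [one_smul] at hunit
  rw [sum_total μ, ← sum_filter_add_sum_filter_not univ (fun a : R => π ∣ a), hunit,
    sum_congr rfl (fun a ha => split_row a (by simpa using ha)), sum_add_distrib, sum_const,
    nsmul_eq_mul, card_dvd, sum_dvd]
  simp_rw [hdiv]
  rw [← mul_sum, scaled_part]
  ring

/-- The proportion of symmetric `n × n` matrices whose determinant is divisible by `π ^ μ`. -/
noncomputable def symmProb (π : R) (n μ : ℕ) : ℝ :=
  symmCount (Fin n) (π ^ μ ∣ ·) / (Fintype.card R : ℝ) ^ (n * (n + 1) / 2)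

theorem pow_triangle_succ {S : Type*} [Monoid S] (K : S) (n : ℕ) :
    K ^ ((n + 1) * (n + 1 + 1) / 2) = K ^ (n + 1) * K ^ (n * (n + 1) / 2) := by
  rw [← pow_add]
  congr 1
  rw [show (n + 1) * (n + 1 + 1) = n * (n + 1) + (n + 1) * 2 by ring,
    Nat.add_mul_div_right _ _ two_pos, add_comm]

theorem nonempty_unit_sum_fin_equiv (n : ℕ) : Nonempty (Unit ⊕ Fin n ≃ Fin (n + 1)) :=
  ⟨Fintype.equivOfCardEq (by simp [add_comm])⟩

theorem card_symm_fin (n : ℕ) :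
    symmCount (Fin n) (fun _ : R => True) = Fintype.card R ^ (n * (n + 1) / 2) := by
  induction n with
  | zero =>
    have : Unique {Z : Matrix (Fin 0) (Fin 0) R // Z.IsSymm ∧ True} :=
      ⟨⟨⟨0, isSymm_zero, trivial⟩⟩, fun Z => Subtype.ext (Subsingleton.elim _ _)⟩
    rw [symmCount, Nat.card_unique]
    rfl
  | succ n ih =>
    obtain ⟨e⟩ := nonempty_unit_sum_fin_equiv n
    have hb (a : R) (v : Fin n → R) :
        borderedCount a v v (fun _ => True) = symmCount (Fin n) (fun _ : R => True) := rfl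
    rw [← symmCount_congr e, symmCount_sum, pow_triangle_succ]
    simp only [hb, ih, sum_const, card_univ, Fintype.card_fun, Fintype.card_fin, smul_eq_mul]
    ring

theorem symmProb_zero_right [Nonempty R] (n : ℕ) : symmProb π n 0 = 1 := by
  have : symmCount (Fin n) (π ^ 0 ∣ ·) = symmCount (Fin n) (fun _ : R => True) := by simp
  rw [symmProb, this, card_symm_fin, Nat.cast_pow, div_self]
  exact pow_ne_zero _ (by exact_mod_cast Fintype.card_ne_zero)

theorem IsTruncatedUniformizer.symmProb_zero_left (h : IsTruncatedUniformizer π p M) {μ : ℕ}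
    (hμ : 1 ≤ μ) : symmProb π 0 μ = 0 := by
  have hπ : ¬ π ∣ 1 := (h.isUnit_iff 1).1 isUnit_one
  have hπμ : ¬ π ^ μ ∣ 1 := fun hd => hπ ((dvd_pow_self π (by lia)).trans hd)
  simp [symmProb, symmCount, hπμ]

theorem IsTruncatedUniformizer.borderedCount_fin_succ (h : IsTruncatedUniformizer π p M)
    {μ m : ℕ} {a : R} {v : Fin (m + 1) → R} (ha : π ∣ a) (hv : ¬ ∀ i, π ∣ v i) :
    borderedCount a v v (π ^ μ ∣ ·)
      = Fintype.card R ^ (m + 1) * symmCount (Fin m) (π ^ μ ∣ ·) := by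
  obtain ⟨i, hi⟩ := not_forall.1 hv
  obtain ⟨e⟩ := nonempty_unit_sum_fin_equiv m
  let σ := e.trans (Equiv.swap (e (.inl ())) i)
  have hσ : σ (.inl ()) = i := by simp [σ]
  rw [← borderedCount_comp σ, borderedCount_of_isUnit_apply _ _ (pow_dvd_isUnit_mul_iff μ),
    Fintype.card_fin]
  intro c
  have hu : IsUnit (v i * v i) := ((h.isUnit_iff _).2 hi).mul ((h.isUnit_iff _).2 hi)
  rw [h.isUnit_iff] at hu ⊢
  rw [Function.comp_apply, hσ, dvd_sub_right (ha.mul_right c)]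
  exact hu

theorem IsTruncatedUniformizer.symmProb_succ (h : IsTruncatedUniformizer π p M) {μ : ℕ}
    (hμ : μ ≤ M) {q : ℝ} (hq : q = 1 / p) (n : ℕ) :
    symmProb π (n + 1) μ = (1 - q) * symmProb π n μ + q * (1 - q ^ n) * symmProb π (n - 1) μ +
      q ^ (n + 1) * ((1 - q) * symmProb π n (μ - 1) + q * symmProb π (n + 1) (μ - 2)) := by
  obtain ⟨e⟩ := nonempty_unit_sum_fin_equiv n
  have hK : (Fintype.card R : ℝ) ≠ 0 := by
    have : Nonempty R := ⟨0⟩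
    exact_mod_cast Fintype.card_ne_zero
  have key := h.symmCount_sum (ι := Fin n) hμ rfl hq (Fintype.card_fin n).symm
    (N := (Fintype.card R : ℝ) ^ n * symmCount (Fin (n - 1)) (π ^ μ ∣ ·)) <| by
      intro a v ha hv
      rcases n with _ | m
      · exact absurd (fun i => i.elim0) hv
      · rw [h.borderedCount_fin_succ ha hv]
        push_cast
        rfl
  rw [symmCount_congr e, symmCount_congr e] at key
  simp only [symmProb, pow_triangle_succ, key]
  rcases n with _ | m
  · simp
    field_simp
  · simp only [Nat.add_sub_cancel, pow_triangle_succ]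
    field_simp

end Recurrence

section ZModPrimePow

variable {p M : ℕ}

theorem ZMod.natCast_pow_dvd_natCast_iff [NeZero p] {m : ℕ} (hm : m ≤ M) (v : ℕ) :
    (p : ZMod (p ^ M)) ^ m ∣ (v : ZMod (p ^ M)) ↔ p ^ m ∣ v := by
  constructor
  · rintro ⟨y, hy⟩
    obtain ⟨y, rfl⟩ := ZMod.natCast_zmod_surjective y
    have : v ≡ p ^ m * y [MOD p ^ M] := by
      rw [← ZMod.natCast_eq_natCast_iff, hy]
      push_cast
      rfl
    exact (this.dvd_iff (pow_dvd_pow p hm)).2 (dvd_mul_right _ _)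
  · rintro ⟨y, rfl⟩
    exact ⟨y, by push_cast; rfl⟩

theorem ZMod.card_natCast_mul_eq_zero (hp : 0 < p) (hM : 1 ≤ M) :
    Nat.card {x : ZMod (p ^ M) // (p : ZMod (p ^ M)) * x = 0} = p := by
  obtain ⟨m, rfl⟩ : ∃ m, M = m + 1 := ⟨M - 1, by lia⟩
  have : NeZero (p ^ (m + 1)) := ⟨(pow_pos hp _).ne'⟩
  have hpm : 0 < p ^ m := pow_pos hp m
  have hmul (x : ZMod (p ^ (m + 1))) :
      (p : ZMod (p ^ (m + 1))) * x = 0 ↔ p ^ m ∣ x.val := by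
    obtain ⟨v, hv⟩ : ∃ v : ℕ, x.val = v := ⟨_, rfl⟩
    rw [← ZMod.natCast_zmod_val x, hv, ZMod.val_cast_of_lt (hv ▸ x.val_lt), ← Nat.cast_mul,
      ZMod.natCast_eq_zero_iff, pow_succ', Nat.mul_dvd_mul_iff_left hp]
  have hlt (i : Fin p) : p ^ m * i < p ^ (m + 1) := by
    rw [pow_succ]
    exact Nat.mul_lt_mul_of_pos_left i.2 hpm
  have hdiv (x : ZMod (p ^ (m + 1))) : x.val / p ^ m < p := by
    rw [Nat.div_lt_iff_lt_mul hpm, ← pow_succ']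
    exact x.val_lt
  have hker (i : Fin p) :
      (p : ZMod (p ^ (m + 1))) * ((p ^ m * i : ℕ) : ZMod (p ^ (m + 1))) = 0 := by
    rw [hmul, ZMod.val_cast_of_lt (hlt i)]
    exact dvd_mul_right _ _
  refine (Nat.card_congr
    { toFun := fun x => (⟨x.1.val / p ^ m, hdiv x.1⟩ : Fin p)
      invFun := fun i => ⟨((p ^ m * i : ℕ) : ZMod (p ^ (m + 1))), hker i⟩
      left_inv := ?_
      right_inv := ?_ }).trans (Nat.card_fin p)
  · rintro ⟨x, hx⟩
    rw [Subtype.mk.injEq, Nat.mul_div_cancel' ((hmul x).1 hx), ZMod.natCast_zmod_val]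
  · intro i
    ext
    simp only [ZMod.val_cast_of_lt (hlt i), Nat.mul_div_cancel_left _ hpm]

theorem ZMod.isTruncatedUniformizer [NeZero p] (hp : p.Prime) (hM : 1 ≤ M) :
    IsTruncatedUniformizer (p : ZMod (p ^ M)) p M where
  isUnit_iff x := by
    obtain ⟨v, rfl⟩ := ZMod.natCast_zmod_surjective x
    have := ZMod.natCast_pow_dvd_natCast_iff (p := p) hM v
    rw [pow_one, pow_one] at this
    rw [this, ZMod.isUnit_iff_coprime, Nat.coprime_pow_right_iff hM, Nat.coprime_comm,
      hp.coprime_iff_not_dvd]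
  card_annihilator := ZMod.card_natCast_mul_eq_zero hp.pos hM
  pow_succ_dvd_mul_iff m x hm := by
    obtain ⟨v, rfl⟩ := ZMod.natCast_zmod_surjective x
    rw [← Nat.cast_mul, ZMod.natCast_pow_dvd_natCast_iff hm,
      ZMod.natCast_pow_dvd_natCast_iff (by lia), pow_succ', Nat.mul_dvd_mul_iff_left hp.pos]

end ZModPrimePow

section ClosedForm

theorem PiProd_zero (t : ℝ) : PiProd 0 t = 1 := prod_range_zero _

theorem PiProd_succ (n : ℕ) (t : ℝ) : PiProd (n + 1) t = PiProd n t * (1 - t ^ (n + 1)) :=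
  prod_range_succ _ _

theorem PiProd_pos {t : ℝ} (h0 : 0 ≤ t) (h1 : t < 1) (n : ℕ) : 0 < PiProd n t :=
  prod_pos fun _ _ => sub_pos.2 (pow_lt_one₀ h0 h1 (Nat.succ_ne_zero _))

variable {q : ℝ}

/-- The `q`-hypergeometric term out of which the closed form is built. -/
noncomputable def hypTerm (q : ℝ) (k s : ℕ) : ℝ :=
  q ^ s * PiProd (2 * k) q * PiProd (k + s) (q ^ 2) /
    (PiProd k (q ^ 2) ^ 2 * PiProd s (q ^ 2))

theorem one_sub_pow_ne_zero (h0 : 0 < q) (h1 : q < 1) {m : ℕ} (hm : m ≠ 0) : 1 - q ^ m ≠ 0 :=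
  (sub_pos.2 (pow_lt_one₀ h0.le h1 hm)).ne'

theorem PiProd_sq_ne_zero (h0 : 0 < q) (h1 : q < 1) (n : ℕ) : PiProd n (q ^ 2) ≠ 0 :=
  (PiProd_pos (by positivity) (pow_lt_one₀ h0.le h1 two_ne_zero) n).ne'

theorem hypTerm_succ_right (h0 : 0 < q) (h1 : q < 1) (k s : ℕ) :
    hypTerm q k (s + 1) * (1 - q ^ (2 * s + 2))
      = q * (1 - q ^ (2 * k + 2 * s + 2)) * hypTerm q k s := by
  have hk := PiProd_sq_ne_zero h0 h1 k
  have hs := PiProd_sq_ne_zero h0 h1 s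
  have hd := one_sub_pow_ne_zero h0 h1 (m := 2 * s + 2) (by lia)
  have e1 : (q ^ 2) ^ (s + 1) = q ^ (2 * s + 2) := by rw [← pow_mul]; ring_nf
  have e2 : (q ^ 2) ^ (k + s + 1) = q ^ (2 * k + 2 * s + 2) := by rw [← pow_mul]; ring_nf
  rw [hypTerm, hypTerm, ← add_assoc, PiProd_succ, PiProd_succ, e1, e2]
  field_simp
  ring

theorem hypTerm_succ_left (h0 : 0 < q) (h1 : q < 1) (k s : ℕ) :
    hypTerm q (k + 1) s * (1 - q ^ (2 * k + 2))
      = (1 - q ^ (2 * k + 1)) * (1 - q ^ (2 * k + 2 * s + 2)) * hypTerm q k s := by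
  have hk := PiProd_sq_ne_zero h0 h1 k
  have hs := PiProd_sq_ne_zero h0 h1 s
  have hd := one_sub_pow_ne_zero h0 h1 (m := 2 * k + 2) (by lia)
  have e1 : (q ^ 2) ^ (k + 1) = q ^ (2 * k + 2) := by rw [← pow_mul]; ring_nf
  have e2 : (q ^ 2) ^ (k + s + 1) = q ^ (2 * k + 2 * s + 2) := by rw [← pow_mul]; ring_nf
  rw [hypTerm, hypTerm, show k + 1 + s = k + s + 1 by ring,
    show 2 * (k + 1) = 2 * k + 1 + 1 by ring,
    PiProd_succ, PiProd_succ, PiProd_succ, PiProd_succ, e1, e2]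
  field_simp

/-- The decrement in `s` of `hypTail`. -/
noncomputable def hypDecr (q : ℝ) : ℕ → ℕ → ℝ
  | 0, 0 => 1
  | 0, _ + 1 => 0
  | k + 1, s => (1 - q ^ (2 * k + 1)) * hypTerm q k s

theorem hypDecr_succ (h0 : 0 < q) (h1 : q < 1) (k s : ℕ) :
    hypDecr q k (s + 1) * (1 - q ^ (2 * s + 2)) = q * (1 - q ^ (2 * k)) * hypTerm q k s := by
  rcases k with _ | k
  · simp [hypDecr]
  · have h := hypTerm_succ_right h0 h1 k s
    have hl := hypTerm_succ_left h0 h1 k s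
    rw [hypDecr]
    linear_combination (1 - q ^ (2 * k + 1)) * h - q * hl

/-- The sum in the closed form that is multiplied by `q ^ μ * (1 - q ^ n)`, with `s` shifted by
one so that the value at `0` is the natural boundary value. -/
noncomputable def hypTail (q : ℝ) (k : ℕ) : ℕ → ℝ
  | 0 => 1
  | s + 1 => ∑ j ∈ range k, q ^ (2 * j + 1) * hypTerm q j s

/-- The remaining sum in the closed form, with the same shift of `s`. -/
noncomputable def hypTailWeighted (q : ℝ) (k : ℕ) : ℕ → ℝ
  | 0 => 1 - q
  | s + 1 => ∑ j ∈ range k, q ^ (2 * s + 2) * q ^ (2 * j + 1) * (1 - q ^ (2 * j + 1)) *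
      hypTerm q j s

theorem hypTail_succ_left (k s : ℕ) : hypTail q (k + 1) (s + 1)
    = hypTail q k (s + 1) + q ^ (2 * k + 1) * hypTerm q k s :=
  sum_range_succ _ _

theorem hypTailWeighted_succ_left (k s : ℕ) : hypTailWeighted q (k + 1) (s + 1)
    = hypTailWeighted q k (s + 1) +
      q ^ (2 * s + 2) * q ^ (2 * k + 1) * (1 - q ^ (2 * k + 1)) * hypTerm q k s :=
  sum_range_succ _ _

theorem hypTerm_zero_right (h0 : 0 < q) (h1 : q < 1) (k : ℕ) :
    hypTerm q k 0 = hypDecr q k 0 := by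
  rcases k with _ | k
  · simp [hypTerm, hypDecr, PiProd_zero]
  · have h := hypTerm_succ_left h0 h1 k 0
    rw [hypDecr]
    refine mul_right_cancel₀ (one_sub_pow_ne_zero h0 h1 (m := 2 * k + 2) (by lia)) ?_
    rw [h]
    ring

theorem hypTail_succ_right (h0 : 0 < q) (h1 : q < 1) (k s : ℕ) :
    hypTail q k (s + 1) = hypTail q k s - hypDecr q k s := by
  induction k with
  | zero => rcases s with _ | s <;> simp [hypTail, hypDecr]
  | succ k ih =>
    rw [hypTail_succ_left, ih, hypDecr]
    rcases s with _ | s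
    · rw [hypTerm_zero_right h0 h1]
      simp only [hypTail]
      ring
    · rw [hypTail_succ_left]
      have h := hypTerm_succ_right h0 h1 k s
      have hl := hypDecr_succ h0 h1 k s
      refine mul_right_cancel₀ (one_sub_pow_ne_zero h0 h1 (m := 2 * s + 2) (by lia)) ?_
      linear_combination h - hl

theorem hypTailWeighted_succ_right (h0 : 0 < q) (h1 : q < 1) (k s : ℕ) :
    hypTailWeighted q k (s + 1)
      = hypTailWeighted q k s - (1 - q ^ (2 * k + 1)) * q ^ (2 * s) * hypDecr q k s := by
  induction k with
  | zero => rcases s with _ | s <;> simp [hypTailWeighted, hypDecr]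
  | succ k ih =>
    rw [hypTailWeighted_succ_left, ih, hypDecr]
    rcases s with _ | s
    · rw [hypTerm_zero_right h0 h1]
      simp only [hypTailWeighted]
      ring
    · rw [hypTailWeighted_succ_left]
      have h := hypTerm_succ_right h0 h1 k s
      have hl := hypDecr_succ h0 h1 k s
      refine mul_right_cancel₀ (one_sub_pow_ne_zero h0 h1 (m := 2 * s + 2) (by lia)) ?_
      linear_combination (1 - q ^ (2 * k + 1)) * q ^ (2 * s + 2) * (h - hl)

/-- The closed form for `(1 - q) * Q(n, p ^ μ)`. -/
noncomputable def closedForm (q : ℝ) (n μ : ℕ) : ℝ :=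
  q ^ μ * (1 - q ^ n) * (1 - hypTail q (n / 2) ((μ + 1) / 2)) +
    hypTailWeighted q (n / 2) ((μ + 1) / 2)

theorem closedForm_zero_right (n : ℕ) : closedForm q n 0 = 1 - q := by
  simp [closedForm, hypTail, hypTailWeighted]

theorem closedForm_zero_left (μ : ℕ) : closedForm q 0 (μ + 1) = 0 := by
  rw [closedForm, show (μ + 1 + 1) / 2 = μ / 2 + 1 by lia]
  simp [hypTailWeighted]

theorem closedForm_one (μ : ℕ) : closedForm q 1 μ = q ^ μ * (1 - q) := by
  rcases μ with _ | μ
  · simp [closedForm_zero_right]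
  · rw [closedForm, show (μ + 1 + 1) / 2 = μ / 2 + 1 by lia]
    simp [hypTail, hypTailWeighted]

theorem closedForm_even_right (n s : ℕ) : closedForm q n (2 * s) =
    q ^ (2 * s) * (1 - q ^ n) * (1 - hypTail q (n / 2) s) + hypTailWeighted q (n / 2) s := by
  rw [closedForm, show (2 * s + 1) / 2 = s by lia]

theorem closedForm_odd_right (n s : ℕ) : closedForm q n (2 * s + 1) =
    q ^ (2 * s + 1) * (1 - q ^ n) * (1 - hypTail q (n / 2) (s + 1)) +
      hypTailWeighted q (n / 2) (s + 1) := by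
  rw [closedForm, show (2 * s + 1 + 1) / 2 = s + 1 by lia]

theorem mul_closedForm_odd_pred (n s : ℕ) : q * closedForm q n (2 * s - 1) =
    q ^ (2 * s) * (1 - q ^ n) * (1 - hypTail q (n / 2) s) + q * hypTailWeighted q (n / 2) s := by
  rcases s with _ | s
  · simp [closedForm, hypTail, hypTailWeighted]
  · rw [show 2 * (s + 1) - 1 = 2 * s + 1 by lia, closedForm_odd_right]
    ring

theorem closedForm_succ (h0 : 0 < q) (h1 : q < 1) (n μ : ℕ) :
    closedForm q (n + 1) (μ + 1) = (1 - q) * closedForm q n (μ + 1) +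
      q * (1 - q ^ n) * closedForm q (n - 1) (μ + 1) +
      q ^ (n + 1) * ((1 - q) * closedForm q n μ + q * closedForm q (n + 1) (μ - 1)) := by
  rcases n with _ | n
  · rw [zero_add, closedForm_one, closedForm_one, closedForm_zero_left]
    rcases μ with _ | μ
    · rw [closedForm_zero_right, Nat.zero_sub]
      ring
    · rw [closedForm_zero_left, Nat.add_sub_cancel]
      ring
  rw [Nat.add_sub_cancel]
  have hx (k s : ℕ) : hypTail q (k + 1) s
      = hypTail q k s - hypDecr q k s + hypTerm q k s := by
    have h := hypTail_succ_right h0 h1 (k + 1) s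
    rw [hypTail_succ_left, hypTail_succ_right h0 h1, hypDecr] at h
    linear_combination -h
  have hy (k s : ℕ) : hypTailWeighted q (k + 1) s =
      hypTailWeighted q k s - (1 - q ^ (2 * k + 1)) * q ^ (2 * s) * hypDecr q k s
        + q ^ (2 * s + 2) * q ^ (2 * k + 1) * (1 - q ^ (2 * k + 1)) * hypTerm q k s
        + (1 - q ^ (2 * k + 3)) * q ^ (2 * s) * ((1 - q ^ (2 * k + 1)) * hypTerm q k s) := by
    have h := hypTailWeighted_succ_right h0 h1 (k + 1) s
    rw [hypTailWeighted_succ_left, hypTailWeighted_succ_right h0 h1, hypDecr] at h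
    linear_combination -h
  obtain ⟨s, rfl | rfl⟩ := μ.even_or_odd'
  · rw [mul_closedForm_odd_pred]
    simp only [closedForm_even_right, closedForm_odd_right]
    obtain ⟨k, rfl | rfl⟩ := n.even_or_odd'
    · rw [show (2 * k + 1 + 1) / 2 = k + 1 by lia, show (2 * k + 1) / 2 = k by lia,
        show 2 * k / 2 = k by lia, hypTail_succ_left, hypTailWeighted_succ_left,
        hypTail_succ_right h0 h1, hypTailWeighted_succ_right h0 h1, hx, hy]
      ring
    · rw [show (2 * k + 1 + 1 + 1) / 2 = k + 1 by lia, show (2 * k + 1 + 1) / 2 = k + 1 by lia,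
        show (2 * k + 1) / 2 = k by lia, hypTail_succ_left, hypTailWeighted_succ_left,
        hypTail_succ_right h0 h1, hypTailWeighted_succ_right h0 h1, hx, hy]
      ring
  · rw [show 2 * s + 1 + 1 = 2 * (s + 1) by ring, show 2 * s + 1 - 1 = 2 * s by lia]
    simp only [closedForm_even_right, closedForm_odd_right]
    obtain ⟨k, rfl | rfl⟩ := n.even_or_odd'
    · rw [show (2 * k + 1 + 1) / 2 = k + 1 by lia, show (2 * k + 1) / 2 = k by lia,
        show 2 * k / 2 = k by lia, hypTail_succ_left, hypTailWeighted_succ_left,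
        hypTail_succ_right h0 h1, hypTailWeighted_succ_right h0 h1, hx, hy]
      ring
    · rw [show (2 * k + 1 + 1 + 1) / 2 = k + 1 by lia, show (2 * k + 1 + 1) / 2 = k + 1 by lia,
        show (2 * k + 1) / 2 = k by lia, hypTail_succ_left, hypTailWeighted_succ_left,
        hypTail_succ_right h0 h1, hypTailWeighted_succ_right h0 h1, hx, hy]
      ring

/-- The recurrence and its boundary values determine the closed form. -/
theorem mul_eq_closedForm (h0 : 0 < q) (h1 : q < 1) {M : ℕ} {F : ℕ → ℕ → ℝ}
    (hF0 : ∀ n, F n 0 = 1) (hF : ∀ μ, 1 ≤ μ → F 0 μ = 0)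
    (hrec : ∀ n μ, μ ≤ M → F (n + 1) μ = (1 - q) * F n μ + q * (1 - q ^ n) * F (n - 1) μ +
      q ^ (n + 1) * ((1 - q) * F n (μ - 1) + q * F (n + 1) (μ - 2)))
    (n μ : ℕ) (hμ : μ ≤ M) : (1 - q) * F n μ = closedForm q n μ := by
  induction n using Nat.strong_induction_on generalizing μ with
  | _ n ihn =>
    induction μ using Nat.strong_induction_on with
    | _ μ ihμ =>
      rcases μ with _ | μ
      · rw [hF0, closedForm_zero_right, mul_one]
      rcases n with _ | n
      · rw [hF _ (by lia), closedForm_zero_left, mul_zero]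
      rw [closedForm_succ h0 h1, hrec n (μ + 1) hμ, ← ihn n (by lia) _ hμ,
        ← ihn (n - 1) (by lia) _ hμ, ← ihn n (by lia) μ (by lia),
        ← ihμ (μ - 1) (by lia) (by lia), Nat.add_sub_cancel, Nat.add_sub_add_right μ 1 1]
      ring

end ClosedForm

theorem Qsym_pow {p : ℕ} [NeZero p] (n μ : ℕ) :
    Qsym n (p ^ μ) = symmProb (p : ZMod (p ^ μ)) n μ := by
  classical
  have hzero (x : ZMod (p ^ μ)) : (p : ZMod (p ^ μ)) ^ μ ∣ x ↔ x = 0 := by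
    rw [← Nat.cast_pow, ZMod.natCast_self, zero_dvd_iff]
  have hsplit : symmCount (Fin n) (fun x : ZMod (p ^ μ) => (p : ZMod (p ^ μ)) ^ μ ∣ x) +
      Nsym n (p ^ μ) = (p ^ μ) ^ (n * (n + 1) / 2) := by
    have := card_symm_fin (R := ZMod (p ^ μ)) n
    rw [ZMod.card] at this
    rw [← this, symmCount, Nsym, symmCount]
    simp only [hzero, and_true, Nat.card_eq_fintype_card, Fintype.card_subtype]
    rw [← card_filter_add_card_filter_not 
      (s := univ.filter fun A : Matrix (Fin n) (Fin n) (ZMod (p ^ μ)) => A.IsSymm)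
      (fun A => A.det = 0), filter_filter, filter_filter]
  have hpos : ((p ^ μ : ℕ) : ℝ) ^ (n * (n + 1) / 2) ≠ 0 :=
    pow_ne_zero _ (by exact_mod_cast NeZero.ne (p ^ μ))
  have hcast : (symmCount (Fin n) (fun x : ZMod (p ^ μ) => (p : ZMod (p ^ μ)) ^ μ ∣ x) : ℝ) +
      Nsym n (p ^ μ) = ((p ^ μ : ℕ) : ℝ) ^ (n * (n + 1) / 2) := by exact_mod_cast hsplit
  rw [Qsym, Psym, symmProb, ZMod.card]
  rw [eq_div_iff hpos, sub_mul, div_mul_cancel₀ _ hpos]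
  linarith

theorem Qsym_explicit (p : ℕ) (hp : p.Prime) (q : ℝ) (hq : q = 1 / p)
    (n μ : ℕ) (hn : 1 ≤ n) (hμ : 1 ≤ μ) (k s : ℕ) (hk : k = n / 2)
    (hs : s = (μ - 1) / 2) (R : ℝ)
    (hR : R = q ^ (s + 1) * ∑ j ∈ Finset.range k,
      (q ^ μ * (1 - q ^ n) - q ^ (2 * s + 2) * (1 - q ^ (2 * j + 1))) * q ^ (2 * j) *
        PiProd (2 * j) q * PiProd (j + s) (q ^ 2) /
          (PiProd j (q ^ 2) ^ 2 * PiProd s (q ^ 2))) :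
    Qsym n (p ^ μ) = (q ^ μ * (1 - q ^ n) - R) / (1 - q) ∧
      0 ≤ R ∧ (R = 0 → k = 0) := by
  have hp1 : (1 : ℝ) < p := by exact_mod_cast hp.one_lt
  have h0 : 0 < q := by rw [hq]; positivity
  have h1 : q < 1 := by rw [hq, div_lt_one (by linarith)]; exact hp1
  have : NeZero p := ⟨hp.ne_zero⟩
  refine ⟨?_, ?_⟩
  · have hπ := ZMod.isTruncatedUniformizer hp hμ
    have key := mul_eq_closedForm h0 h1 (M := μ) (F := symmProb (p : ZMod (p ^ μ)))
      symmProb_zero_right (fun _ => hπ.symmProb_zero_left)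
      (fun n ν hν => hπ.symmProb_succ hν hq n) n μ le_rfl
    rw [Qsym_pow, eq_div_iff (sub_pos.2 h1).ne', mul_comm, key, closedForm, ← hk,
      show (μ + 1) / 2 = s + 1 by lia]
    have hR' : R = q ^ μ * (1 - q ^ n) * hypTail q k (s + 1) - hypTailWeighted q k (s + 1) := by
      rw [hR, hypTail, hypTailWeighted, mul_sum, mul_sum, ← sum_sub_distrib]
      refine sum_congr rfl fun j _ => ?_
      rw [hypTerm]
      ring
    rw [hR']
    ring
  · have hterm (j : ℕ) (hj : j ∈ range k) :
        0 < (q ^ μ * (1 - q ^ n) - q ^ (2 * s + 2) * (1 - q ^ (2 * j + 1))) * q ^ (2 * j) *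
          PiProd (2 * j) q * PiProd (j + s) (q ^ 2) /
            (PiProd j (q ^ 2) ^ 2 * PiProd s (q ^ 2)) := by
      rw [mem_range] at hj
      have hPi (m : ℕ) : 0 < PiProd m (q ^ 2) :=
        PiProd_pos (by positivity) (pow_lt_one₀ h0.le h1 two_ne_zero) m
      have hPi' := PiProd_pos h0.le h1 (2 * j)
      have hPj := hPi j
      have hPs := hPi s
      have hPjs := hPi (j + s)
      have hfactor : 0 < q ^ μ * (1 - q ^ n) - q ^ (2 * s + 2) * (1 - q ^ (2 * j + 1)) := by
        have hle : q ^ (2 * s + 2) ≤ q ^ μ := pow_le_pow_of_le_one h0.le h1.le (by lia)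
        have hlt : q ^ n < q ^ (2 * j + 1) := pow_lt_pow_right_of_lt_one₀ h0 h1 (by lia)
        have hlt1 : q ^ (2 * j + 1) < 1 := pow_lt_one₀ h0.le h1 (by lia)
        have hpos : 0 < q ^ μ := pow_pos h0 μ
        nlinarith
      positivity
    refine ⟨?_, fun hR0 => ?_⟩
    · rw [hR]
      exact mul_nonneg (by positivity) (sum_nonneg fun j hj => (hterm j hj).le)
    · by_contra hk0
      have : 0 < R := by
        rw [hR]
        exact mul_pos (by positivity) (sum_pos hterm (nonempty_range_iff.2 hk0))
      exact this.ne' hR0
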